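/- Let m and n be positive integers with n ≥ 4 even, and let 0 ≤ ℓ ≤ n−1 be an integer of the same parity as m. Let G = ⟨t, x, y | t² = 1, x^{n/2} = 1, y^m = x^{(ℓ+m)/2}, txt = x⁻¹, tyt = y⁻¹, xy = yx⟩. Then the honeycomb toroidal graph HTG(m,n,ℓ) is isomorphic to the Cayley graph Cay(G; {t, tx, ty}). -/

import Mathlib

namespace HTGPaper

/-- The honeycomb toroidal graph `HTG(m,n,ℓ)`. -/
def HTG (m n ℓ : ℕ) : SimpleGraph (ZMod m × ZMod n) :=
  SimpleGraph.fromRel (fun v w =>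
    (v.1 = w.1 ∧ (w.2 = v.2 + 1 ∨ w.2 = v.2 - 1)) ∨
    (v.1.val ≠ m - 1 ∧ w.1 = v.1 + 1 ∧ w.2 = v.2 ∧ v.1.val % 2 ≠ v.2.val % 2) ∨
    (v.1.val = m - 1 ∧ w.1 = 0 ∧ w.2 = v.2 + (ℓ : ZMod n) ∧ v.2.val % 2 = m % 2))

/-- Generators of the generalized dihedral group `G`. -/
inductive Gen | t | x | y

/-- Relators of the presentation of `G`. -/
def rels (m n ℓ : ℕ) : Set (FreeGroup Gen) :=
  {FreeGroup.of Gen.t ^ 2,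
   FreeGroup.of Gen.x ^ (n / 2),
   FreeGroup.of Gen.y ^ m * (FreeGroup.of Gen.x ^ ((ℓ + m) / 2))⁻¹,
   FreeGroup.of Gen.t * FreeGroup.of Gen.x * (FreeGroup.of Gen.t)⁻¹ * FreeGroup.of Gen.x,
   FreeGroup.of Gen.t * FreeGroup.of Gen.y * (FreeGroup.of Gen.t)⁻¹ * FreeGroup.of Gen.y,
   FreeGroup.of Gen.x * FreeGroup.of Gen.y * (FreeGroup.of Gen.x)⁻¹ * (FreeGroup.of Gen.y)⁻¹}

/-- The group `G = ⟨t,x,y | t², x^{n/2}, y^m x^{-(ℓ+m)/2}, txt⁻¹x, tyt⁻¹y, [x,y]⟩`. -/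
abbrev G (m n ℓ : ℕ) : Type := PresentedGroup (rels m n ℓ)

def gent (m n ℓ : ℕ) : G m n ℓ := PresentedGroup.of Gen.t
def genx (m n ℓ : ℕ) : G m n ℓ := PresentedGroup.of Gen.x
def geny (m n ℓ : ℕ) : G m n ℓ := PresentedGroup.of Gen.y

/-- The connection set `{t, tx, ty}`. -/
def S (m n ℓ : ℕ) : Set (G m n ℓ) :=
  {gent m n ℓ, gent m n ℓ * genx m n ℓ, gent m n ℓ * geny m n ℓ}

/-- The Cayley graph of a group with respect to a subset. -/
def cayley (H : Type*) [Group H] (T : Set H) : SimpleGraph H :=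
  SimpleGraph.fromRel (fun g h => ∃ s ∈ T, h = g * s)

/-- The Cayley graph of an additive group with respect to a subset. -/
def addCayley (H : Type*) [AddGroup H] (T : Set H) : SimpleGraph H :=
  SimpleGraph.fromRel (fun g h => ∃ s ∈ T, h = g + s)

/-- `Cay(H;T)` is a normal Cayley graph of `H` if the left regular representation `H_L`
is a normal subgroup of the automorphism group, i.e. every conjugate of a left
translation by a graph automorphism is again a left translation. -/
def IsNormalCayley (H : Type*) [Group H] (T : Set H) : Prop :=
  ∀ (f : cayley H T ≃g cayley H T) (a : H), ∃ b : H,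
    ∀ g : H, f (a * f.symm g) = b * g

/-- An `s`-arc of a graph: `s+1` vertices, consecutive ones adjacent, and any three
consecutive vertices pairwise distinct. -/
def IsSArc {V : Type*} (Γ : SimpleGraph V) (s : ℕ) (p : Fin (s + 1) → V) : Prop :=
  (∀ i : Fin s, Γ.Adj (p i.castSucc) (p i.succ)) ∧
  ∀ i j : Fin (s + 1), (i : ℕ) + 2 = (j : ℕ) → p i ≠ p j

/-- A graph is `s`-arc-transitive if its automorphism group is transitive on `s`-arcs. -/
def IsSArcTransitive {V : Type*} (Γ : SimpleGraph V) (s : ℕ) : Prop :=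
  ∀ p q : Fin (s + 1) → V, IsSArc Γ s p → IsSArc Γ s q →
    ∃ f : Γ ≃g Γ, ∀ i, f (p i) = q i

/-- A graph is `s`-arc-regular if its automorphism group is regular on `s`-arcs. -/
def IsSArcRegular {V : Type*} (Γ : SimpleGraph V) (s : ℕ) : Prop :=
  ∀ p q : Fin (s + 1) → V, IsSArc Γ s p → IsSArc Γ s q →
    ∃! f : Γ ≃g Γ, ∀ i, f (p i) = q i

/-- A graph is arc-transitive if it is `1`-arc-transitive. -/
def IsArcTransitive {V : Type*} (Γ : SimpleGraph V) : Prop :=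
  IsSArcTransitive Γ 1

/-- The generalized prism `GPr(k)`. -/
def GPr (k : ℕ) : SimpleGraph (ZMod 2 × ZMod (2 * k)) :=
  SimpleGraph.fromRel (fun v w =>
    (v.1 = w.1 ∧ (w.2 = v.2 + 1 ∨ w.2 = v.2 - 1)) ∨
    (Even v.2.val ∧ w.1 = v.1 + 1 ∧ w.2 = v.2 + 1))

/-- The cubic graph on `k` vertices given by LCF-type data `f`. -/
def lcfGraph (k : ℕ) (f : ℕ → ℤ) : SimpleGraph (ZMod k) :=
  SimpleGraph.fromRel (fun v w => w = v + 1 ∨ w = v + (f v.val : ZMod k))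

/-- The cube graph `Q₃`, LCF notation `[3,-3]⁴`. -/
def cubeGraph : SimpleGraph (ZMod 8) :=
  lcfGraph 8 (fun i => if i % 2 = 0 then 3 else -3)

/-- The Heawood graph, LCF notation `[5,-5]⁷`. -/
def heawood : SimpleGraph (ZMod 14) :=
  lcfGraph 14 (fun i => if i % 2 = 0 then 5 else -5)

/-- The Möbius–Kantor graph, LCF notation `[5,-5]⁸`. -/
def mobiusKantor : SimpleGraph (ZMod 16) :=
  lcfGraph 16 (fun i => if i % 2 = 0 then 5 else -5)

/-- The Pappus graph, LCF notation `[5,7,-7,7,-7,-5]³`. -/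
def pappus : SimpleGraph (ZMod 18) :=
  lcfGraph 18 (fun i =>
    match i % 6 with
    | 0 => 5 | 1 => 7 | 2 => -7 | 3 => 7 | 4 => -7 | _ => -5)

/-- The red edges of `HTG(m,n,ℓ) = Cay(G;{t,tx,ty})`. -/
def Red (m n ℓ : ℕ) : Set (Sym2 (G m n ℓ)) :=
  {e | ∃ g : G m n ℓ, e = s(g, g * gent m n ℓ)}

/-- The blue edges. -/
def Blue (m n ℓ : ℕ) : Set (Sym2 (G m n ℓ)) :=
  {e | ∃ g : G m n ℓ, e = s(g, g * (gent m n ℓ * genx m n ℓ))}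

/-- The green edges. -/
def Green (m n ℓ : ℕ) : Set (Sym2 (G m n ℓ)) :=
  {e | ∃ g : G m n ℓ, e = s(g, g * (gent m n ℓ * geny m n ℓ))}

/-- The three color classes. -/
def colorClasses (m n ℓ : ℕ) : Set (Set (Sym2 (G m n ℓ))) :=
  {Red m n ℓ, Blue m n ℓ, Green m n ℓ}

/-- An automorphism of `Cay(G;{t,tx,ty})` is color permuting if it preserves the
partition of the edges into the three color classes. -/
def IsColorPermuting {m n ℓ : ℕ}
    (f : cayley (G m n ℓ) (S m n ℓ) ≃g cayley (G m n ℓ) (S m n ℓ)) : Prop :=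
  ∀ C ∈ colorClasses m n ℓ, Sym2.map ⇑f '' C ∈ colorClasses m n ℓ

/-- The group `Aut(H;T)` of automorphisms of `H` fixing `T` setwise. -/
def autFixing (H : Type*) [Group H] (T : Set H) : Subgroup (MulAut H) where
  carrier := {φ | ⇑φ '' T = T}
  one_mem' := by
    show ⇑(1 : MulAut H) '' T = T
    simp
  mul_mem' := by
    intro a b ha hb
    show ⇑(a * b) '' T = T
    have h : ⇑(a * b) = ⇑a ∘ ⇑b := rfl
    rw [h, Set.image_comp]
    rw [show ⇑b '' T = T from hb, show ⇑a '' T = T from ha]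
  inv_mem' := by
    intro a ha
    show ⇑a⁻¹ '' T = T
    conv_lhs => rw [← show ⇑a '' T = T from ha]
    rw [← Set.image_comp]
    have h : ⇑a⁻¹ ∘ ⇑a = id := by
      funext g
      simp
    rw [h, Set.image_id]


/-- The parametrisation of the group by pairs of integers. -/
def FF {H : Type*} [Group H] (t x y : H) (i j : ℤ) : H :=
  y ^ i * x ^ ((j - i) / 2) * (if (j - i) % 2 = 0 then 1 else t)

section abstract_group
variable {H : Type*} [Group H] (t x y : H)

theorem FF_even (i j c : ℤ) (h : j = i + 2 * c) : FF t x y i j = y ^ i * x ^ c := by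
  have h1 : (j - i) / 2 = c := by omega
  have h2 : (j - i) % 2 = 0 := by omega
  simp [FF, h1, h2]

theorem FF_odd (i j c : ℤ) (h : j = i + 2 * c + 1) : FF t x y i j = y ^ i * x ^ c * t := by
  have h1 : (j - i) / 2 = c := by omega
  have h2 : (j - i) % 2 = 1 := by omega
  simp [FF, h1, h2]

theorem FF_right_even (i j : ℤ) (h : (j - i) % 2 = 0) :
    FF t x y i (j + 1) = FF t x y i j * t := by
  obtain ⟨c, hc⟩ : ∃ c, j = i + 2 * c := ⟨(j - i) / 2, by omega⟩
  rw [FF_even t x y i j c hc, FF_odd t x y i (j + 1) c (by omega)]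

theorem FF_right_odd (htt : t * t = 1) (i j : ℤ) (h : (j - i) % 2 = 1) :
    FF t x y i (j + 1) = FF t x y i j * (t * x) := by
  obtain ⟨c, hc⟩ : ∃ c, j = i + 2 * c + 1 := ⟨(j - i) / 2, by omega⟩
  rw [FF_odd t x y i j c hc, FF_even t x y i (j + 1) (c + 1) (by omega), zpow_add_one]
  calc y ^ i * (x ^ c * x) = y ^ i * x ^ c * (1 * x) := by group
    _ = _ := by rw [← htt]; simp only [mul_assoc]

theorem FF_up_odd (htt : t * t = 1) (hxy : x * y = y * x) (i j : ℤ) (h : (j - i) % 2 = 1) :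
    FF t x y (i + 1) j = FF t x y i j * (t * y) := by
  obtain ⟨c, hc⟩ : ∃ c, j = i + 2 * c + 1 := ⟨(j - i) / 2, by omega⟩
  rw [FF_odd t x y i j c hc, FF_even t x y (i + 1) j c (by omega), zpow_add_one]
  have hc : x ^ c * y = y * x ^ c := (Commute.zpow_left (show Commute x y from hxy) c)
  calc y ^ i * y * x ^ c = y ^ i * (x ^ c * (1 * y)) := by rw [one_mul, hc, mul_assoc]
    _ = _ := by rw [← htt]; simp only [mul_assoc]

theorem FF_wrap (m ℓ : ℕ) (hpar : ℓ % 2 = m % 2) (hy : y ^ m = x ^ ((ℓ + m) / 2)) (j : ℤ) :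
    FF t x y m j = FF t x y 0 (j + ℓ) := by
  have hy' : y ^ (m : ℤ) = x ^ (((ℓ + m) / 2 : ℕ) : ℤ) := by
    rw [zpow_natCast, zpow_natCast, hy]
  rcases Int.emod_two_eq_zero_or_one (j - m) with h | h
  · obtain ⟨c, hc⟩ : ∃ c, j = m + 2 * c := ⟨(j - m) / 2, by omega⟩
    rw [FF_even t x y m j c hc,
      FF_even t x y 0 (j + ℓ) (((ℓ + m) / 2 : ℕ) + c) (by omega), hy', zpow_add]
    simp
  · obtain ⟨c, hc⟩ : ∃ c, j = m + 2 * c + 1 := ⟨(j - m) / 2, by omega⟩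
    rw [FF_odd t x y m j c hc,
      FF_odd t x y 0 (j + ℓ) (((ℓ + m) / 2 : ℕ) + c) (by omega), hy', zpow_add]
    simp

theorem FF_period (n : ℕ) (hne : Even n) (hx : x ^ (n / 2) = 1) (i j j' : ℤ)
    (h : (j : ZMod n) = (j' : ZMod n)) :
    FF t x y i j = FF t x y i j' := by
  rw [ZMod.intCast_eq_intCast_iff_dvd_sub] at h
  obtain ⟨k, hk⟩ := h
  obtain ⟨r, hr⟩ := hne
  have hr2 : n / 2 = r := by omega
  rw [hr2] at hx
  have hxk : x ^ ((r : ℤ) * k) = 1 := by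
    rw [zpow_mul, zpow_natCast, hx, one_zpow]
  have hk' : j' = j + 2 * ((r : ℤ) * k) := by
    have : (n : ℤ) = 2 * r := by omega
    rw [this] at hk
    linarith
  generalize (r : ℤ) * k = q at hk' hxk
  rcases Int.emod_two_eq_zero_or_one (j - i) with h | h
  · obtain ⟨c, hc⟩ : ∃ c, j = i + 2 * c := ⟨(j - i) / 2, by omega⟩
    rw [FF_even t x y i j c hc, FF_even t x y i j' (c + q) (by omega), zpow_add, hxk, mul_one]
  · obtain ⟨c, hc⟩ : ∃ c, j = i + 2 * c + 1 := ⟨(j - i) / 2, by omega⟩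
    rw [FF_odd t x y i j c hc, FF_odd t x y i j' (c + q) (by omega), zpow_add, hxk, mul_one]

end abstract_group

section relations
variable (m n ℓ : ℕ)

theorem rel_one {r : FreeGroup Gen} (h : r ∈ rels m n ℓ) :
    (PresentedGroup.mk (rels m n ℓ) r) = 1 :=
  (PresentedGroup.one_of_mem h)

theorem rel_tt : gent m n ℓ * gent m n ℓ = 1 := by
  have := rel_one m n ℓ (r := FreeGroup.of Gen.t ^ 2) (by simp [rels])
  rw [map_pow, pow_two] at this
  exact this

theorem rel_x : genx m n ℓ ^ (n / 2) = 1 := by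
  have := rel_one m n ℓ (r := FreeGroup.of Gen.x ^ (n / 2)) (by simp [rels])
  rw [map_pow] at this
  exact this

theorem rel_y : geny m n ℓ ^ m = genx m n ℓ ^ ((ℓ + m) / 2) := by
  have := rel_one m n ℓ
    (r := FreeGroup.of Gen.y ^ m * (FreeGroup.of Gen.x ^ ((ℓ + m) / 2))⁻¹) (by simp [rels])
  rw [map_mul, map_inv, map_pow, map_pow, mul_inv_eq_one] at this
  exact this

theorem rel_tx : gent m n ℓ * genx m n ℓ * (gent m n ℓ)⁻¹ * genx m n ℓ = 1 := by
  have := rel_one m n ℓ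
    (r := FreeGroup.of Gen.t * FreeGroup.of Gen.x * (FreeGroup.of Gen.t)⁻¹ * FreeGroup.of Gen.x)
    (by simp [rels])
  simp only [map_mul, map_inv] at this
  exact this

theorem rel_ty : gent m n ℓ * geny m n ℓ * (gent m n ℓ)⁻¹ * geny m n ℓ = 1 := by
  have := rel_one m n ℓ
    (r := FreeGroup.of Gen.t * FreeGroup.of Gen.y * (FreeGroup.of Gen.t)⁻¹ * FreeGroup.of Gen.y)
    (by simp [rels])
  simp only [map_mul, map_inv] at this
  exact this

theorem rel_xy : genx m n ℓ * geny m n ℓ = geny m n ℓ * genx m n ℓ := by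
  have := rel_one m n ℓ
    (r := FreeGroup.of Gen.x * FreeGroup.of Gen.y * (FreeGroup.of Gen.x)⁻¹ *
      (FreeGroup.of Gen.y)⁻¹)
    (by simp [rels])
  simp only [map_mul, map_inv] at this
  rw [mul_inv_eq_one, mul_inv_eq_iff_eq_mul] at this
  exact this

theorem inv_t : (gent m n ℓ)⁻¹ = gent m n ℓ := inv_eq_of_mul_eq_one_left (rel_tt m n ℓ)

theorem S_invol {s : G m n ℓ} (hs : s ∈ S m n ℓ) : s * s = 1 := by
  have h1 := rel_tx m n ℓ
  have h2 := rel_ty m n ℓ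
  rw [inv_t] at h1 h2
  rcases hs with rfl | rfl | rfl
  · exact rel_tt m n ℓ
  · rw [← mul_assoc]; exact h1
  · rw [← mul_assoc]; exact h2

/-- The lattice of relations in the abelian part. -/
def latt : AddSubgroup (ℤ × ℤ) where
  carrier := {p | ∃ k q : ℤ, p = (k * (n / 2 : ℕ) + q * ((ℓ + m) / 2 : ℕ), - (q * m))}
  zero_mem' := ⟨0, 0, by ext <;> simp⟩
  add_mem' := by
    rintro _ _ ⟨k, q, rfl⟩ ⟨k', q', rfl⟩
    exact ⟨k + k', q + q', by ext <;> simp <;> ring⟩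
  neg_mem' := by
    rintro _ ⟨k, q, rfl⟩
    exact ⟨-k, -q, by ext <;> simp; ring⟩

/-- The abelian part. -/
abbrev AA : Type := (ℤ × ℤ) ⧸ latt m n ℓ

/-- Class of a pair. -/
def cls (a b : ℤ) : AA m n ℓ := QuotientAddGroup.mk (a, b)

/-- The images of the generators as permutations. -/
def permGen : Gen → Equiv.Perm (AA m n ℓ)
  | Gen.t => Equiv.neg _
  | Gen.x => Equiv.addRight (cls m n ℓ 1 0)
  | Gen.y => Equiv.addRight (cls m n ℓ 0 1)

theorem addRight_zpow {A : Type*} [AddCommGroup A] (a : A) (k : ℤ) :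
    (Equiv.addRight a) ^ k = Equiv.addRight (k • a) := by
  simp

theorem addRight_npow {A : Type*} [AddCommGroup A] (a : A) (k : ℕ) :
    (Equiv.addRight a) ^ k = Equiv.addRight (k • a) := by
  simp

theorem nsmul_cls (k : ℕ) (a b : ℤ) : k • cls m n ℓ a b = cls m n ℓ (k * a) (k * b) := by
  rw [cls, ← QuotientAddGroup.mk_nsmul]; simp [cls]

theorem zsmul_cls (k : ℤ) (a b : ℤ) : k • cls m n ℓ a b = cls m n ℓ (k * a) (k * b) := by
  rw [cls, ← QuotientAddGroup.mk_zsmul]; simp [cls]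

theorem cls_eq (a b a' b' : ℤ) : cls m n ℓ a b = cls m n ℓ a' b' ↔
    ∃ k q : ℤ, a' - a = k * (n / 2 : ℕ) + q * ((ℓ + m) / 2 : ℕ) ∧ b' - b = - (q * m) := by
  rw [cls, cls, QuotientAddGroup.eq]
  show (∃ k q : ℤ, _ = _) ↔ _
  simp [Prod.ext_iff, sub_eq_neg_add]

theorem permGen_rels : ∀ r ∈ rels m n ℓ, FreeGroup.lift (permGen m n ℓ) r = 1 := by
  rintro r (rfl | rfl | rfl | rfl | rfl | rfl)
  · ext a; simp [permGen, pow_two]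
  · simp only [map_pow, FreeGroup.lift_apply_of, permGen, addRight_npow, nsmul_cls]
    have : cls m n ℓ ((n / 2 : ℕ) * 1) ((n / 2 : ℕ) * 0) = cls m n ℓ 0 0 := by
      rw [cls_eq]; exact ⟨-1, 0, by simp, by simp⟩
    have h0 : cls m n ℓ 0 0 = 0 := rfl
    rw [this, h0]; ext a; simp
  · simp only [map_pow, map_mul, map_inv, FreeGroup.lift_apply_of, permGen, addRight_npow,
      nsmul_cls]
    rw [mul_inv_eq_one]
    congr 1
    rw [cls_eq]; exact ⟨0, 1, by simp, by simp⟩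
  · ext a; simp [permGen]
  · ext a; simp [permGen]
  · ext a; simp [permGen, add_assoc, add_comm, add_left_comm]

/-- The permutation representation. -/
def permHom : G m n ℓ →* Equiv.Perm (AA m n ℓ) :=
  PresentedGroup.toGroup (permGen_rels m n ℓ)

/-- The images of the generators under parity. -/
def parGen : Gen → Multiplicative (ZMod 2)
  | Gen.t => Multiplicative.ofAdd 1
  | Gen.x => 1
  | Gen.y => 1

theorem parGen_rels : ∀ r ∈ rels m n ℓ, FreeGroup.lift parGen r = 1 := by
  rintro r (rfl | rfl | rfl | rfl | rfl | rfl) <;> simp [parGen]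
  decide

/-- The parity homomorphism. -/
def parHom : G m n ℓ →* Multiplicative (ZMod 2) :=
  PresentedGroup.toGroup (parGen_rels m n ℓ)

theorem permHom_t : permHom m n ℓ (gent m n ℓ) = Equiv.neg _ := PresentedGroup.toGroup.of _
theorem permHom_x : permHom m n ℓ (genx m n ℓ) = Equiv.addRight (cls m n ℓ 1 0) :=
  PresentedGroup.toGroup.of _
theorem permHom_y : permHom m n ℓ (geny m n ℓ) = Equiv.addRight (cls m n ℓ 0 1) :=
  PresentedGroup.toGroup.of _
theorem parHom_t : parHom m n ℓ (gent m n ℓ) = Multiplicative.ofAdd 1 :=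
  PresentedGroup.toGroup.of _
theorem parHom_x : parHom m n ℓ (genx m n ℓ) = 1 := PresentedGroup.toGroup.of _
theorem parHom_y : parHom m n ℓ (geny m n ℓ) = 1 := PresentedGroup.toGroup.of _

/-- The parametrisation of `G`. -/
abbrev F (i j : ℤ) : G m n ℓ := FF (gent m n ℓ) (genx m n ℓ) (geny m n ℓ) i j

theorem permHom_F (i j : ℤ) :
    permHom m n ℓ (F m n ℓ i j) 0 = cls m n ℓ ((j - i) / 2) i := by
  have key : permHom m n ℓ (if (j - i) % 2 = 0 then 1 else gent m n ℓ) 0 = 0 := by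
    split_ifs
    · simp
    · rw [permHom_t]; simp
  rw [F, FF, map_mul, Equiv.Perm.mul_apply, key, map_mul, map_zpow, map_zpow, permHom_x,
    permHom_y, addRight_zpow, addRight_zpow, zsmul_cls, zsmul_cls]
  simp [cls, ← QuotientAddGroup.mk_add]

theorem parHom_F (i j : ℤ) :
    parHom m n ℓ (F m n ℓ i j) = if (j - i) % 2 = 0 then 1 else Multiplicative.ofAdd 1 := by
  rw [F, FF]
  split_ifs <;> simp [parHom_t, parHom_x, parHom_y]

theorem F_inj (hne : Even n) (hm : 0 < m) (i j i' j' : ℤ) (hi : 0 ≤ i) (him : i < m)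
    (hi' : 0 ≤ i') (him' : i' < m) (h : F m n ℓ i j = F m n ℓ i' j') :
    i = i' ∧ (j : ZMod n) = (j' : ZMod n) := by
  have h1 := congrArg (fun g => permHom m n ℓ g 0) h
  have h2 := congrArg (parHom m n ℓ) h
  simp only [permHom_F] at h1
  rw [parHom_F, parHom_F] at h2
  have h3 : (j - i) % 2 = (j' - i') % 2 := by
    have : (1 : Multiplicative (ZMod 2)) ≠ Multiplicative.ofAdd 1 := by decide
    split_ifs at h2 <;> first | omega | exact absurd h2 this | exact absurd h2.symm this
  rw [cls_eq] at h1
  obtain ⟨k, q, hk, hq⟩ := h1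
  have hq0 : q = 0 := by
    by_contra hne
    rcases lt_or_gt_of_ne hne with hlt | hgt
    · nlinarith
    · nlinarith
  subst hq0
  have hii : i = i' := by simp at hq; omega
  subst hii
  refine ⟨rfl, ?_⟩
  rw [ZMod.intCast_eq_intCast_iff_dvd_sub]
  obtain ⟨r, hr⟩ := hne
  have hr2 : n / 2 = r := by omega
  rw [hr2] at hk
  refine ⟨k, ?_⟩
  have : (n : ℤ) = 2 * r := by omega
  rw [this]
  simp only [zero_mul, add_zero] at hk
  have h5 : j' - j = 2 * (k * r) := by rw [← hk]; omega
  rw [h5]; ring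

end relations

/-- The directed relation defining the graph. -/
def R (m n ℓ : ℕ) (v w : ZMod m × ZMod n) : Prop :=
    (v.1 = w.1 ∧ (w.2 = v.2 + 1 ∨ w.2 = v.2 - 1)) ∨
    (v.1.val ≠ m - 1 ∧ w.1 = v.1 + 1 ∧ w.2 = v.2 ∧ v.1.val % 2 ≠ v.2.val % 2) ∨
    (v.1.val = m - 1 ∧ w.1 = 0 ∧ w.2 = v.2 + (ℓ : ZMod n) ∧ v.2.val % 2 = m % 2)

/-- The vertex map. -/
def f (m n ℓ : ℕ) (v : ZMod m × ZMod n) : G m n ℓ := F m n ℓ (v.1.val : ℤ) (v.2.val : ℤ)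


theorem f_inj (m n ℓ : ℕ) (hm : 0 < m) (hn : 4 ≤ n) (hne : Even n) :
    Function.Injective (f m n ℓ) := by
  have : NeZero m := ⟨by omega⟩
  have : NeZero n := ⟨by omega⟩
  rintro ⟨a, b⟩ ⟨a', b'⟩ h
  obtain ⟨h1, h2⟩ := F_inj m n ℓ hne hm _ _ _ _ (by positivity)
    (by exact_mod_cast ZMod.val_lt a) (by positivity) (by exact_mod_cast ZMod.val_lt a') h
  rw [Int.cast_natCast, Int.cast_natCast, ZMod.natCast_zmod_val, ZMod.natCast_zmod_val] at h2
  rw [Prod.mk.injEq]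
  exact ⟨ZMod.val_injective m (by exact_mod_cast h1), h2⟩

theorem f_eq (m n ℓ : ℕ) (hn : 4 ≤ n) (hne : Even n) (a : ZMod m) (b : ZMod n) (j : ℤ)
    (h : b = (j : ZMod n)) : f m n ℓ (a, b) = F m n ℓ a.val j := by
  have : NeZero n := ⟨by omega⟩
  refine FF_period _ _ _ n hne (rel_x m n ℓ) _ _ _ ?_
  simp [h]

theorem f_vert (m n ℓ : ℕ) (hm : 0 < m) (hn : 4 ≤ n) (hne : Even n) (hpar : ℓ % 2 = m % 2)
    (v w : ZMod m × ZMod n)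
    (h : (v.1.val ≠ m - 1 ∧ w.1 = v.1 + 1 ∧ w.2 = v.2 ∧ v.1.val % 2 ≠ v.2.val % 2) ∨
      (v.1.val = m - 1 ∧ w.1 = 0 ∧ w.2 = v.2 + (ℓ : ZMod n) ∧ v.2.val % 2 = m % 2)) :
    f m n ℓ w = f m n ℓ v * (gent m n ℓ * geny m n ℓ) := by
  have : NeZero m := ⟨by omega⟩
  have : NeZero n := ⟨by omega⟩
  obtain ⟨a, b⟩ := v
  obtain ⟨a', b'⟩ := w
  have hlt := ZMod.val_lt a
  rcases h with ⟨h1, h2, h3, h4⟩ | ⟨h1, h2, h3, h4⟩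
  · simp only at h1 h2 h3 h4
    subst h2 h3
    have hv : (a + 1).val = a.val + 1 := by
      have h5 : a + 1 = ((a.val + 1 : ℕ) : ZMod m) := by simp
      rw [h5, ZMod.val_natCast, Nat.mod_eq_of_lt (by omega)]
    rw [f, f]
    simp only [hv]
    push_cast
    exact FF_up_odd _ _ _ (rel_tt m n ℓ) (rel_xy m n ℓ) _ _ (by omega)
  · simp only at h1 h2 h3 h4
    subst h2 h3
    rw [f_eq m n ℓ hn hne 0 (b + ℓ) (b.val + ℓ) (by simp), ZMod.val_zero]
    have := FF_wrap (gent m n ℓ) (genx m n ℓ) (geny m n ℓ) m ℓ hpar (rel_y m n ℓ) b.val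
    rw [Nat.cast_zero, F, ← this, f]
    have hmm : (m : ℤ) = (a.val : ℤ) + 1 := by omega
    rw [hmm]
    exact FF_up_odd _ _ _ (rel_tt m n ℓ) (rel_xy m n ℓ) _ _ (by omega)

theorem mem_t (m n ℓ : ℕ) : gent m n ℓ ∈ S m n ℓ := by simp [S]
theorem mem_tx (m n ℓ : ℕ) : gent m n ℓ * genx m n ℓ ∈ S m n ℓ := by simp [S]
theorem mem_ty (m n ℓ : ℕ) : gent m n ℓ * geny m n ℓ ∈ S m n ℓ := by simp [S]

theorem eq_mul_invol (m n ℓ : ℕ) {s g h : G m n ℓ} (hs : s ∈ S m n ℓ) (e : g = h * s) :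
    h = g * s := by
  rw [e, mul_assoc, S_invol m n ℓ hs, mul_one]

theorem f_right (m n ℓ : ℕ) (hn : 4 ≤ n) (hne : Even n) (a : ZMod m) (b : ZMod n) :
    f m n ℓ (a, b + 1) = f m n ℓ (a, b) *
      (if ((b.val : ℤ) - a.val) % 2 = 0 then gent m n ℓ else gent m n ℓ * genx m n ℓ) := by
  have : NeZero n := ⟨by omega⟩
  rw [f_eq m n ℓ hn hne a (b + 1) (b.val + 1) (by simp)]
  split_ifs with h
  · exact FF_right_even _ _ _ _ _ h
  · exact FF_right_odd _ _ _ (rel_tt m n ℓ) _ _ (by omega)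

theorem f_left (m n ℓ : ℕ) (hn : 4 ≤ n) (hne : Even n) (a : ZMod m) (b : ZMod n) :
    f m n ℓ (a, b - 1) = f m n ℓ (a, b) *
      (if ((b.val : ℤ) - a.val) % 2 = 0 then gent m n ℓ * genx m n ℓ else gent m n ℓ) := by
  have : NeZero n := ⟨by omega⟩
  rw [f_eq m n ℓ hn hne a (b - 1) (b.val - 1) (by simp)]
  split_ifs with h
  · apply eq_mul_invol m n ℓ (mem_tx m n ℓ)
    rw [F, ← FF_right_odd _ _ _ (rel_tt m n ℓ) _ _ (by omega), sub_add_cancel, f]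
  · apply eq_mul_invol m n ℓ (mem_t m n ℓ)
    rw [F, ← FF_right_even _ _ _ _ _ (by omega), sub_add_cancel, f]

theorem R_imp (m n ℓ : ℕ) (hm : 0 < m) (hn : 4 ≤ n) (hne : Even n) (hpar : ℓ % 2 = m % 2)
    (v w : ZMod m × ZMod n) (h : R m n ℓ v w) :
    ∃ s ∈ S m n ℓ, f m n ℓ w = f m n ℓ v * s := by
  rcases h with ⟨h1, h2⟩ | h
  · obtain ⟨a, b⟩ := v
    obtain ⟨a', b'⟩ := w
    simp only at h1 h2
    subst h1
    rcases h2 with rfl | rfl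
    · refine ⟨_, ?_, f_right m n ℓ hn hne a b⟩
      split_ifs
      · exact mem_t m n ℓ
      · exact mem_tx m n ℓ
    · refine ⟨_, ?_, f_left m n ℓ hn hne a b⟩
      split_ifs
      · exact mem_tx m n ℓ
      · exact mem_t m n ℓ
  · exact ⟨_, mem_ty m n ℓ, f_vert m n ℓ hm hn hne hpar v w h⟩

theorem exists_nbr (m n ℓ : ℕ) (hm : 0 < m) (hn : 4 ≤ n) (hne : Even n) (hpar : ℓ % 2 = m % 2)
    (v : ZMod m × ZMod n) (s : G m n ℓ) (hs : s ∈ S m n ℓ) :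
    ∃ w, (R m n ℓ v w ∨ R m n ℓ w v) ∧ f m n ℓ w = f m n ℓ v * s := by
  have : NeZero m := ⟨by omega⟩
  have : NeZero n := ⟨by omega⟩
  obtain ⟨a, b⟩ := v
  have hr := f_right m n ℓ hn hne a b
  have hl := f_left m n ℓ hn hne a b
  have Rr : R m n ℓ (a, b) (a, b + 1) := Or.inl ⟨rfl, Or.inl rfl⟩
  have Rl : R m n ℓ (a, b) (a, b - 1) := Or.inl ⟨rfl, Or.inr rfl⟩
  have hlt := ZMod.val_lt a
  rcases hs with rfl | rfl | rfl
  · split_ifs at hr hl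
    · exact ⟨_, Or.inl Rr, hr⟩
    · exact ⟨_, Or.inl Rl, hl⟩
  · split_ifs at hr hl
    · exact ⟨_, Or.inl Rl, hl⟩
    · exact ⟨_, Or.inl Rr, hr⟩
  · by_cases hp : a.val % 2 = b.val % 2
    · have key : ∀ w : ZMod m × ZMod n,
          ((w.1.val ≠ m - 1 ∧ a = w.1 + 1 ∧ b = w.2 ∧ w.1.val % 2 ≠ w.2.val % 2) ∨
          (w.1.val = m - 1 ∧ a = 0 ∧ b = w.2 + (ℓ : ZMod n) ∧ w.2.val % 2 = m % 2)) →
          ∃ w, (R m n ℓ (a, b) w ∨ R m n ℓ w (a, b)) ∧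
            f m n ℓ w = f m n ℓ (a, b) * (gent m n ℓ * geny m n ℓ) := by
        intro w hw
        exact ⟨w, Or.inr (Or.inr hw), eq_mul_invol m n ℓ (mem_ty m n ℓ)
          (f_vert m n ℓ hm hn hne hpar w (a, b) hw)⟩
      by_cases h0 : a.val = 0
      · refine key (((m - 1 : ℕ) : ZMod m), b - (ℓ : ZMod n)) (Or.inr ⟨?_, ?_, ?_, ?_⟩)
        · rw [ZMod.val_natCast, Nat.mod_eq_of_lt (by omega)]
        · exact (ZMod.val_eq_zero a).1 h0
        · simp
        · have e : ((((b - (ℓ : ZMod n)).val : ℕ) : ℤ) : ZMod n) = (((b.val : ℤ) - ℓ : ℤ) : ZMod n) := by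
            simp
          rw [ZMod.intCast_eq_intCast_iff_dvd_sub] at e
          have h2 : (2 : ℤ) ∣ n := by exact_mod_cast hne.two_dvd
          have := h2.trans e
          simp only
          omega
      · have hv : (((a.val - 1 : ℕ) : ZMod m)).val = a.val - 1 := by
          rw [ZMod.val_natCast, Nat.mod_eq_of_lt (by omega)]
        refine key (((a.val - 1 : ℕ) : ZMod m), b) (Or.inl ⟨?_, ?_, rfl, ?_⟩)
        · simp only [hv]; omega
        · have : ((a.val - 1 : ℕ) : ZMod m) + 1 = ((a.val - 1 + 1 : ℕ) : ZMod m) := by push_cast; rfl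
          simp only [this, Nat.sub_add_cancel (show 1 ≤ a.val by omega)]
          simp
        · simp only [hv]; omega
    · have key : ∀ w : ZMod m × ZMod n,
          ((a.val ≠ m - 1 ∧ w.1 = a + 1 ∧ w.2 = b ∧ a.val % 2 ≠ b.val % 2) ∨
          (a.val = m - 1 ∧ w.1 = 0 ∧ w.2 = b + (ℓ : ZMod n) ∧ b.val % 2 = m % 2)) →
          ∃ w, (R m n ℓ (a, b) w ∨ R m n ℓ w (a, b)) ∧
            f m n ℓ w = f m n ℓ (a, b) * (gent m n ℓ * geny m n ℓ) := by
        intro w hw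
        exact ⟨w, Or.inl (Or.inr hw), f_vert m n ℓ hm hn hne hpar (a, b) w hw⟩
      by_cases h0 : a.val = m - 1
      · exact key (0, b + ℓ) (Or.inr ⟨h0, rfl, rfl, by omega⟩)
      · exact key (a + 1, b) (Or.inl ⟨h0, rfl, rfl, hp⟩)

theorem f_surj (m n ℓ : ℕ) (hm : 0 < m) (hn : 4 ≤ n) (hne : Even n) (hpar : ℓ % 2 = m % 2) :
    Function.Surjective (f m n ℓ) := by
  have hS : ∀ s ∈ S m n ℓ, ∀ v, ∃ w, f m n ℓ w = f m n ℓ v * s := fun s hs v =>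
    (exists_nbr m n ℓ hm hn hne hpar v s hs).imp fun _ h => h.2
  have hmul : ∀ g h : G m n ℓ, (∀ v, ∃ w, f m n ℓ w = f m n ℓ v * g) →
      (∀ v, ∃ w, f m n ℓ w = f m n ℓ v * h) → ∀ v, ∃ w, f m n ℓ w = f m n ℓ v * (g * h) := by
    intro g h hg hh v
    obtain ⟨w, hw⟩ := hg v
    obtain ⟨w', hw'⟩ := hh w
    exact ⟨w', by rw [hw', hw, mul_assoc]⟩
  have ht := hS _ (mem_t m n ℓ)
  have htx := hS _ (mem_tx m n ℓ)
  have hty := hS _ (mem_ty m n ℓ)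
  have hall : ∀ g : G m n ℓ, (∀ v, ∃ w, f m n ℓ w = f m n ℓ v * g) ∧
      (∀ v, ∃ w, f m n ℓ w = f m n ℓ v * g⁻¹) := by
    intro g
    have hg : g ∈ Subgroup.closure (Set.range (PresentedGroup.of (rels := rels m n ℓ))) := by
      rw [PresentedGroup.closure_range_of]; trivial
    induction hg using Subgroup.closure_induction with
    | mem z hz =>
      have e : ∀ z : G m n ℓ, gent m n ℓ * (gent m n ℓ * z) = z := fun z => by
        rw [← mul_assoc, rel_tt, one_mul]
      have e' : ∀ z : G m n ℓ, (gent m n ℓ * z) ∈ S m n ℓ → (gent m n ℓ * z) * gent m n ℓ = z⁻¹ :=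
        fun z hz => by
          apply eq_inv_of_mul_eq_one_left
          rw [mul_assoc]
          exact S_invol m n ℓ hz
      obtain ⟨c, rfl⟩ := hz
      cases c with
      | t => exact ⟨ht, by
          have := inv_t m n ℓ
          change ∀ v, ∃ w, f m n ℓ w = f m n ℓ v * (gent m n ℓ)⁻¹
          rw [this]; exact ht⟩
      | x =>
        have h1 := hmul _ _ ht htx
        have h2 := hmul _ _ htx ht
        rw [e] at h1
        rw [e' _ (mem_tx m n ℓ)] at h2
        exact ⟨h1, h2⟩
      | y =>
        have h1 := hmul _ _ ht hty
        have h2 := hmul _ _ hty ht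
        rw [e] at h1
        rw [e' _ (mem_ty m n ℓ)] at h2
        exact ⟨h1, h2⟩
    | one => simp only [inv_one, mul_one]; exact ⟨fun v => ⟨v, rfl⟩, fun v => ⟨v, rfl⟩⟩
    | mul g h _ _ hg hh =>
      rw [mul_inv_rev]
      exact ⟨hmul _ _ hg.1 hh.1, hmul _ _ hh.2 hg.2⟩
    | inv g _ hg => rw [inv_inv]; exact ⟨hg.2, hg.1⟩
  intro g
  obtain ⟨w, hw⟩ := (hall ((f m n ℓ (0, 0))⁻¹ * g)).1 (0, 0)
  exact ⟨w, by rw [hw, mul_inv_cancel_left]⟩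

/-- **Proposition (Alspach–Dean).** `HTG(m,n,ℓ)` is isomorphic to the Cayley graph
`Cay(G; {t, tx, ty})` of the generalized dihedral group `G`. -/
theorem statement5 (m n ℓ : ℕ) (hm : 0 < m) (hn : 4 ≤ n) (hne : Even n)
    (hl : ℓ ≤ n - 1) (hpar : ℓ % 2 = m % 2) :
    Nonempty (HTG m n ℓ ≃g cayley (G m n ℓ) (S m n ℓ)) := by
  have hinj := f_inj m n ℓ hm hn hne
  have hbij : Function.Bijective (f m n ℓ) := ⟨hinj, f_surj m n ℓ hm hn hne hpar⟩
  have back : ∀ v w, (∃ s ∈ S m n ℓ, f m n ℓ w = f m n ℓ v * s) →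
      (R m n ℓ v w ∨ R m n ℓ w v) := by
    rintro v w ⟨s, hs, e⟩
    obtain ⟨w', hR, e'⟩ := exists_nbr m n ℓ hm hn hne hpar v s hs
    have : w = w' := hinj (e.trans e'.symm)
    rw [this]; exact hR
  refine ⟨⟨Equiv.ofBijective _ hbij, ?_⟩⟩
  intro v w
  simp only [Equiv.ofBijective_apply, cayley, HTG, SimpleGraph.fromRel_adj, ne_eq, hinj.eq_iff]
  refine and_congr_right fun _ => ?_
  constructor
  · rintro (h | h)
    · exact back v w h
    · exact (back w v h).symm
  · rintro (h | h)
    · exact Or.inl (R_imp m n ℓ hm hn hne hpar v w h)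
    · exact Or.inr (R_imp m n ℓ hm hn hne hpar w v h)

end HTGPaper
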